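/- Common-message broadcast achievability (used in the network-coding strategy of Remark 2): Let W₁ : A → S(H₁) and W₂ : A → S(H₂) be classical-quantum channels with a common finite input alphabet A, and let P be a probability distribution on A. For every ε > 0 and δ > 0, for all sufficiently large n there exist a single codebook {c(k)}_{k=1}^{J} ⊂ Aⁿ with (1/n)·log₂ J ≥ min(χ(P;W₁), χ(P;W₂)) − δ, a POVM {E_k}_{k=1}^{J} on H₁^{⊗n}, and a POVM {F_k}_{k=1}^{J} on H₂^{⊗n} such that (1/J) Σ_{k=1}^{J} tr((id − E_k) W₁^{⊗n}(c(k))) ≤ ε and (1/J) Σ_{k=1}^{J} tr((id − F_k) W₂^{⊗n}(c(k))) ≤ ε. -/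

import Mathlib

open scoped BigOperators ComplexOrder

noncomputable section

/-- The Loewner order on operators: `A ≤ B` iff `B - A` is positive semidefinite. -/
def loewnerLE {ι : Type*} [Fintype ι] (A B : Matrix ι ι ℂ) : Prop := (B - A).PosSemidef

/-- A quantum state: a positive semidefinite operator with unit trace. -/
def IsState {ι : Type*} [Fintype ι] (ρ : Matrix ι ι ℂ) : Prop := ρ.PosSemidef ∧ ρ.trace = 1

/-- The von Neumann entropy `S(ρ) = −tr(ρ log₂ ρ)`, computed via eigenvalues. -/
noncomputable def vnEntropy {ι : Type*} [Fintype ι] [DecidableEq ι] (ρ : Matrix ι ι ℂ) : ℝ :=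
  if h : ρ.IsHermitian then -∑ i, h.eigenvalues i * Real.logb 2 (h.eigenvalues i) else 0

/-- The trace norm `‖A‖₁ = tr √(AᴴA)` (sum of singular values). -/
noncomputable def traceNorm {ι : Type*} [Fintype ι] [DecidableEq ι] (A : Matrix ι ι ℂ) : ℝ :=
  ∑ i, Real.sqrt ((Matrix.posSemidef_conjTranspose_mul_self A).1.eigenvalues i)

/-- A probability distribution on a finite set. -/
def IsDist {A : Type*} [Fintype A] (P : A → ℝ) : Prop := (∀ a, 0 ≤ P a) ∧ ∑ a, P a = 1

/-- The Holevo quantity `χ(P;W) = S(PW) − Σ_a P(a) S(W(a))`. -/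
noncomputable def holevo {A ι : Type*} [Fintype A] [Fintype ι] [DecidableEq ι]
    (P : A → ℝ) (W : A → Matrix ι ι ℂ) : ℝ :=
  vnEntropy (∑ a, (P a : ℂ) • W a) - ∑ a, P a * vnEntropy (W a)

/-- Tensor product `M 0 ⊗ ⋯ ⊗ M (n−1)` of matrices, realized on the index set `Fin n → ι`. -/
def tensorPow {n : ℕ} {ι : Type*} [Fintype ι] (M : Fin n → Matrix ι ι ℂ) :
    Matrix (Fin n → ι) (Fin n → ι) ℂ :=
  Matrix.of fun i j => ∏ k, M k (i k) (j k)

/-- The `n`-fold extension `W^{⊗n}(xⁿ) = W(x₁) ⊗ ⋯ ⊗ W(xₙ)` of a cq channel. -/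
def cqPow {A ι : Type*} [Fintype ι] (W : A → Matrix ι ι ℂ) (n : ℕ) (x : Fin n → A) :
    Matrix (Fin n → ι) (Fin n → ι) ℂ :=
  tensorPow fun k => W (x k)

/-- A POVM: positive semidefinite operators summing to at most the identity. -/
def IsPOVM {ι J : Type*} [Fintype ι] [DecidableEq ι] [Fintype J] (D : J → Matrix ι ι ℂ) : Prop :=
  (∀ j, (D j).PosSemidef) ∧ loewnerLE (∑ j, D j) 1

/-- Existence of an `(n, J₁, J₂)` bidirectional broadcast code for the cq channels `W₁`, `W₂`
with average errors `e₁ ≤ ε₁` and `e₂ ≤ ε₂`. -/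
def BroadcastCodeExists {A ι₁ ι₂ : Type*} [Fintype A] [Fintype ι₁] [DecidableEq ι₁]
    [Fintype ι₂] [DecidableEq ι₂]
    (W1 : A → Matrix ι₁ ι₁ ℂ) (W2 : A → Matrix ι₂ ι₂ ℂ)
    (n J1 J2 : ℕ) (ε₁ ε₂ : ℝ) : Prop :=
  ∃ (w : Fin J1 × Fin J2 → Fin n → A)
    (D1 : Fin J2 → Fin J1 → Matrix (Fin n → ι₁) (Fin n → ι₁) ℂ)
    (D2 : Fin J1 → Fin J2 → Matrix (Fin n → ι₂) (Fin n → ι₂) ℂ),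
    (∀ m2, IsPOVM (D1 m2)) ∧ (∀ m1, IsPOVM (D2 m1)) ∧
    (∀ m2, ((J1 : ℝ))⁻¹ * ∑ m1, ((1 - D1 m2 m1) * cqPow W1 n (w (m1, m2))).trace.re ≤ ε₁) ∧
    (∀ m1, ((J2 : ℝ))⁻¹ * ∑ m2, ((1 - D2 m1 m2) * cqPow W2 n (w (m1, m2))).trace.re ≤ ε₂)


/-- Existence of an `(n, J₁, J₂)` code for the cq multiple-access channel `W`
with average error at most `ε`. -/
def MACCodeExists {Y1 Y2 ι : Type*} [Fintype ι] [DecidableEq ι]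
    (W : Y1 → Y2 → Matrix ι ι ℂ) (n J1 J2 : ℕ) (ε : ℝ) : Prop :=
  ∃ (u : Fin J1 → Fin n → Y1) (v : Fin J2 → Fin n → Y2)
    (D : Fin J1 × Fin J2 → Matrix (Fin n → ι) (Fin n → ι) ℂ),
    IsPOVM D ∧
    (1 / ((J1 : ℝ) * (J2 : ℝ))) * ∑ m : Fin J1 × Fin J2,
      ((1 - D m) * tensorPow (fun k => W (u m.1 k) (v m.2 k))).trace.re ≤ ε

end

/-!
Draw `J ≈ 2 ^ (n R)` codewords independently from `P^{⊗n}`. A receiver first projects onto the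
typical subspace of `(PW)^{⊗n}` by `G`, and then tests the codewords one after the other with the
conditionally typical projections `Q x`, deciding for the first test that succeeds. Gao's quantum
union bound controls the error on the `k`-th codeword by the traces of `9 (1 - G) + 8 (1 - Q (c k))`
and of `4 ∑_{j < k} G Q (c j) G` in the received state. On average over the codebook the first trace
vanishes by the asymptotic equipartition property. In the second the codewords `c j` and `c k` are
independent, so the received state averages to `(PW)^{⊗n}`, which is at most about `2 ^ (-n S(PW))`
on the range of `G`, while `Q x` has rank at most about `2 ^ (n S(W|P))`; the sum is therefore
small as soon as `R < χ(P;W)`. For `R < min (χ(P;W₁)) (χ(P;W₂))` the sum of the errors of the two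
receivers has small mean, hence is small for some codebook, and both of its terms are nonnegative.
-/

section SequentialDecoding

variable {R : Type*} [Ring R] [StarRing R]

/-- The operator `(1 - Q (k - 1)) ⋯ (1 - Q 1) (1 - Q 0)` of a sequential measurement in which the
first `k` tests `Q i` have all failed. -/
def rejectFirst (Q : ℕ → R) : ℕ → R
  | 0 => 1
  | k + 1 => (1 - Q k) * rejectFirst Q k

lemma sum_star_rejectFirst_mul_mul {Q : ℕ → R} (hQ : ∀ i, IsStarProjection (Q i)) (k : ℕ) :
    ∑ i ∈ Finset.range k, star (rejectFirst Q i) * Q i * rejectFirst Q i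
      = 1 - star (rejectFirst Q k) * rejectFirst Q k := by
  induction k with
  | zero => simp [rejectFirst]
  | succ k ih =>
    have h_reject : star (rejectFirst Q (k + 1)) * rejectFirst Q (k + 1)
        = star (rejectFirst Q k) * (1 - Q k) * rejectFirst Q k := by
      rw [rejectFirst, star_mul, (hQ k).one_sub.isSelfAdjoint.star_eq, mul_assoc,
        ← mul_assoc (1 - Q k), (hQ k).one_sub.isIdempotentElem.eq, mul_assoc]
    rw [Finset.sum_range_succ, ih, h_reject]
    noncomm_ring

lemma isStarProjection_extend_zero {J : ℕ} {Q : Fin J → R} (hQ : ∀ j, IsStarProjection (Q j))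
    (i : ℕ) : IsStarProjection (Function.extend Fin.val Q 0 i) := by
  by_cases hi : ∃ j : Fin J, j.val = i
  · obtain ⟨j, rfl⟩ := hi
    rw [Fin.val_injective.extend_apply]
    exact hQ j
  · rw [Function.extend_apply' _ _ _ hi]
    exact .zero R

variable [PartialOrder R] [StarOrderedRing R]

lemma star_two_sub_mul_self_le_step {Y S P : R} (hP : IsStarProjection P)
    (h : star (2 - Y) * (2 - Y) ≤ 1 + 4 • S) :
    star (2 - (1 - P) * Y) * (2 - (1 - P) * Y) ≤ 1 + 4 • (S + P) := by
  have h_square := star_mul_self_nonneg (2 • P - P * Y)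
  have h_idem (Z : R) : P * (P * Z) = P * Z := by rw [← mul_assoc, hP.isIdempotentElem.eq]
  rw [← sub_nonneg] at h ⊢
  convert add_nonneg h h_square using 1
  simp only [star_sub, star_mul, star_nsmul, star_ofNat, hP.isSelfAdjoint.star_eq, sub_mul, mul_sub,
    one_mul, smul_mul_assoc, mul_smul_comm, mul_assoc, hP.isIdempotentElem.eq, h_idem]
  noncomm_ring

-- The invariant behind Gao's quantum union bound: unlike `1 - star Y * Y ≤ 4 • S`, it survives
-- multiplying `Y` by one more projection.
lemma star_two_sub_rejectFirst_mul_self_le {Q : ℕ → R} (hQ : ∀ i, IsStarProjection (Q i)) (k : ℕ) :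
    star (2 - rejectFirst Q k) * (2 - rejectFirst Q k) ≤ 1 + 4 • ∑ i ∈ Finset.range k, Q i := by
  induction k with
  | zero => norm_num [rejectFirst]
  | succ k ih =>
    rw [Finset.sum_range_succ]
    exact star_two_sub_mul_self_le_step (hQ k) ih

lemma one_sub_star_mul_self_le_of_star_two_sub_mul_self_le {Y S : R}
    (h : star (2 - Y) * (2 - Y) ≤ 1 + 4 • S) : 1 - star Y * Y ≤ 4 • S := by
  have h_square := nsmul_nonneg (star_mul_self_nonneg (1 - Y)) 2
  rw [← sub_nonneg] at h ⊢
  convert add_nonneg h h_square using 1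
  simp only [star_sub, star_add, star_one, ← one_add_one_eq_two]
  noncomm_ring

lemma one_sub_star_rejectFirst_mul_mul_le {Q : ℕ → R} (hQ : ∀ i, IsStarProjection (Q i)) (k : ℕ) :
    1 - star (rejectFirst Q k) * Q k * rejectFirst Q k
      ≤ 4 • (∑ i ∈ Finset.range k, Q i + (1 - Q k)) := by
  have h_bound := one_sub_star_mul_self_le_of_star_two_sub_mul_self_le
    (star_two_sub_mul_self_le_step (hQ k).one_sub (star_two_sub_rejectFirst_mul_self_le hQ k))
  rwa [sub_sub_cancel, star_mul, (hQ k).isSelfAdjoint.star_eq, mul_assoc, ← mul_assoc (Q k),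
    (hQ k).isIdempotentElem.eq, ← mul_assoc] at h_bound

lemma mul_projection_mul_le {G P : R} (hG : IsStarProjection G) (hP : IsStarProjection P) :
    G * P * G ≤ 2 • P + 2 • (1 - G) := by
  have h_parallelogram := star_mul_self_nonneg (P + P * (1 - G))
  have h_compress := nsmul_nonneg
    (hG.one_sub.isSelfAdjoint.conjugate_nonneg hP.one_sub.nonneg) 2
  have h_idem (Z : R) : P * (P * Z) = P * Z := by rw [← mul_assoc, hP.isIdempotentElem.eq]
  rw [← sub_nonneg]
  convert add_nonneg h_parallelogram h_compress using 1
  simp only [star_add, star_sub, star_mul, hP.isSelfAdjoint.star_eq, hG.isSelfAdjoint.star_eq,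
    sub_mul, mul_sub, add_mul, mul_add, one_mul, mul_one, mul_assoc, hP.isIdempotentElem.eq,
    hG.isIdempotentElem.eq, h_idem]
  noncomm_ring

/-- The `k`-th effect of the sequential decoder: project by `G`, apply the tests `Q 0`, `Q 1`, … in
turn, and decide for `k` when `Q k` is the first of them to succeed. -/
def sequentialEffect (G : R) (Q : ℕ → R) (k : ℕ) : R :=
  G * (star (rejectFirst Q k) * Q k * rejectFirst Q k) * G

variable {G : R} {Q : ℕ → R}

lemma sequentialEffect_nonneg (hG : IsStarProjection G) (hQ : ∀ i, IsStarProjection (Q i))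
    (k : ℕ) : 0 ≤ sequentialEffect G Q k :=
  hG.isSelfAdjoint.conjugate_nonneg (star_left_conjugate_nonneg (hQ k).nonneg _)

lemma sum_sequentialEffect_le_one (hG : IsStarProjection G) (hQ : ∀ i, IsStarProjection (Q i))
    (k : ℕ) : ∑ i ∈ Finset.range k, sequentialEffect G Q i ≤ 1 :=
  calc ∑ i ∈ Finset.range k, sequentialEffect G Q i
      = G * (1 - star (rejectFirst Q k) * rejectFirst Q k) * G := by
        rw [← sum_star_rejectFirst_mul_mul hQ, Finset.mul_sum, Finset.sum_mul]
        rfl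
    _ ≤ G * 1 * G :=
        hG.isSelfAdjoint.conjugate_le_conjugate (sub_le_self _ (star_mul_self_nonneg _))
    _ = G := by rw [mul_one, hG.isIdempotentElem.eq]
    _ ≤ 1 := hG.le_one

theorem one_sub_sequentialEffect_le (hG : IsStarProjection G) (hQ : ∀ i, IsStarProjection (Q i))
    (k : ℕ) : 1 - sequentialEffect G Q k
      ≤ 9 • (1 - G) + 8 • (1 - Q k) + 4 • ∑ i ∈ Finset.range k, G * Q i * G :=
  calc 1 - sequentialEffect G Q k
      = (1 - G) + G * (1 - star (rejectFirst Q k) * Q k * rejectFirst Q k) * G := by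
        rw [mul_sub, sub_mul, mul_one, hG.isIdempotentElem.eq, sequentialEffect]
        abel
    _ ≤ (1 - G) + G * (4 • (∑ i ∈ Finset.range k, Q i + (1 - Q k))) * G := by
        gcongr
        exact hG.isSelfAdjoint.conjugate_le_conjugate (one_sub_star_rejectFirst_mul_mul_le hQ k)
    _ = (1 - G) + 4 • (G * (1 - Q k) * G) + 4 • ∑ i ∈ Finset.range k, G * Q i * G := by
        rw [← Finset.sum_mul, ← Finset.mul_sum]
        noncomm_ring
    _ ≤ (1 - G) + 4 • (2 • (1 - Q k) + 2 • (1 - G)) + 4 • ∑ i ∈ Finset.range k, G * Q i * G := by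
        gcongr
        exact mul_projection_mul_le hG (hQ k).one_sub
    _ = 9 • (1 - G) + 8 • (1 - Q k) + 4 • ∑ i ∈ Finset.range k, G * Q i * G := by
        abel

/-- The sequential decoder for a finite list of tests, which are padded with the test `0` that
always fails. -/
noncomputable def sequentialDecoder {J : ℕ} (G : R) (Q : Fin J → R) (k : Fin J) : R :=
  sequentialEffect G (Function.extend Fin.val Q 0) k

variable {J : ℕ} {Q : Fin J → R}

lemma sequentialDecoder_nonneg (hG : IsStarProjection G) (hQ : ∀ j, IsStarProjection (Q j))
    (k : Fin J) : 0 ≤ sequentialDecoder G Q k :=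
  sequentialEffect_nonneg hG (isStarProjection_extend_zero hQ) k

lemma sum_sequentialDecoder_le_one (hG : IsStarProjection G) (hQ : ∀ j, IsStarProjection (Q j)) :
    ∑ k, sequentialDecoder G Q k ≤ 1 :=
  (Fin.sum_univ_eq_sum_range (sequentialEffect G (Function.extend Fin.val Q 0)) J).trans_le
    (sum_sequentialEffect_le_one hG (isStarProjection_extend_zero hQ) J)

theorem one_sub_sequentialDecoder_le (hG : IsStarProjection G) (hQ : ∀ j, IsStarProjection (Q j))
    (k : Fin J) : 1 - sequentialDecoder G Q k
      ≤ 9 • (1 - G) + 8 • (1 - Q k) + 4 • ∑ j ∈ Finset.Iio k, G * Q j * G := by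
  have h_bound := one_sub_sequentialEffect_le hG (isStarProjection_extend_zero hQ) k
  rw [← Nat.Iio_eq_range, ← Fin.map_valEmbedding_Iio, Finset.sum_map] at h_bound
  simpa only [Fin.valEmbedding_apply, Fin.val_injective.extend_apply, sequentialDecoder]
    using h_bound

end SequentialDecoding

section ProductDistributions

variable {κ X : Type*} [Fintype κ]

/-- The joint probability `∏ i, p i (x i)` of independent letters `x i` with laws `p i`. A constant
`p` gives i.i.d. letters, and iterating that gives i.i.d. random codebooks. -/
def piDist (p : κ → X → ℝ) (x : κ → X) : ℝ := ∏ i, p i (x i)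

lemma piDist_nonneg {p : κ → X → ℝ} (hp : ∀ i x, 0 ≤ p i x) (x : κ → X) : 0 ≤ piDist p x :=
  Finset.prod_nonneg fun i _ => hp i (x i)

variable [Fintype X]

lemma IsDist.exists_le_of_sum_mul_le {p f : X → ℝ} {a : ℝ} (hp : IsDist p)
    (h : ∑ x, p x * f x ≤ a) : ∃ x, f x ≤ a := by
  have h_center : Finset.univ.centerMass p f ≤ a := by
    simpa [Finset.centerMass, hp.2] using h
  obtain ⟨x, -, hx⟩ := (concaveOn_id convex_univ).exists_le_of_centerMass (p := f)
    (fun x _ => hp.1 x) (hp.2.symm ▸ zero_lt_one) (fun x _ => Set.mem_univ (f x))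
  exact ⟨x, hx.trans h_center⟩

variable [DecidableEq κ]

lemma IsDist.piDist {p : κ → X → ℝ} (hp : ∀ i, IsDist (p i)) : IsDist (piDist p) := by
  refine ⟨piDist_nonneg fun i => (hp i).1, ?_⟩
  simp only [_root_.piDist, ← Fintype.prod_sum, (hp _).2, Finset.prod_const_one]

lemma sum_piDist_mul_eq_sum_mul_sum (p : κ → X → ℝ) (k : κ)
    (F : X → ({i // i ≠ k} → X) → ℝ) :
    ∑ c, piDist p c * F (c k) (fun i => c i)
      = ∑ x, p k x * ∑ r, piDist (fun i : {i // i ≠ k} => p i) r * F x r := by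
  rw [← (Equiv.funSplitAt k X).symm.sum_comp, Fintype.sum_prod_type]
  refine Finset.sum_congr rfl fun x _ => ?_
  rw [Finset.mul_sum]
  refine Finset.sum_congr rfl fun r _ => ?_
  have h_restrict (i : {i // i ≠ k}) : (Equiv.funSplitAt k X).symm (x, r) i = r i := by
    simp [i.2]
  have h_apply : (Equiv.funSplitAt k X).symm (x, r) k = x := by simp
  simp only [piDist, Fintype.prod_eq_mul_prod_subtype_ne _ k, h_restrict, h_apply, mul_assoc]

variable {p : κ → X → ℝ}

lemma sum_piDist_mul_apply (hp : ∀ i, IsDist (p i)) (k : κ) (g : X → ℝ) :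
    ∑ c, piDist p c * g (c k) = ∑ x, p k x * g x := by
  rw [sum_piDist_mul_eq_sum_mul_sum p k fun x _ => g x]
  simp only [← Finset.sum_mul, (IsDist.piDist fun i : {i // i ≠ k} => hp i).2, one_mul]

lemma sum_piDist_mul_apply_apply (hp : ∀ i, IsDist (p i)) {j k : κ} (hkj : k ≠ j)
    (g : X → X → ℝ) :
    ∑ c, piDist p c * g (c j) (c k) = ∑ x, p j x * ∑ y, p k y * g x y := by
  rw [sum_piDist_mul_eq_sum_mul_sum p j fun x r => g x (r ⟨k, hkj⟩)]
  refine Finset.sum_congr rfl fun x _ => ?_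
  rw [sum_piDist_mul_apply (fun i : {i // i ≠ j} => hp i) ⟨k, hkj⟩ fun y => g x y]

section Codebook

variable {J : ℕ} {p : X → ℝ} (u : X → ℝ) {v : X → X → ℝ} {b : ℝ}

lemma sum_piDist_mul_add_sum_Iio_le (hp : IsDist p) (hb : 0 ≤ b)
    (hv : ∀ x, ∑ y, p y * v x y ≤ b) (k : Fin J) :
    ∑ c, piDist (fun _ => p) c * (u (c k) + ∑ j ∈ Finset.Iio k, v (c j) (c k))
      ≤ ∑ x, p x * u x + (J - 1) * b := by
  have h_pair {j : Fin J} (hj : j ∈ Finset.Iio k) :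
      ∑ c, piDist (fun _ => p) c * v (c j) (c k) ≤ b := by
    rw [sum_piDist_mul_apply_apply (fun _ => hp) (Finset.mem_Iio.mp hj).ne' v]
    calc ∑ x, p x * ∑ y, p y * v x y ≤ ∑ x, p x * b := by
          gcongr with x
          exacts [hp.1 x, hv x]
      _ = b := by rw [← Finset.sum_mul, hp.2, one_mul]
  have h_card : ((Finset.Iio k).card : ℝ) ≤ J - 1 := by
    rw [Fin.card_Iio, le_sub_iff_add_le]
    exact_mod_cast k.2
  simp only [mul_add, Finset.sum_add_distrib, Finset.mul_sum]
  rw [sum_piDist_mul_apply (fun _ => hp) k u, Finset.sum_comm]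
  gcongr
  calc _ ≤ (Finset.Iio k).card • b := Finset.sum_le_card_nsmul _ _ _ fun j hj => h_pair hj
    _ ≤ (J - 1) * b := by rw [nsmul_eq_mul]; gcongr

lemma sum_piDist_mul_average_le (hJ : J ≠ 0) (hp : IsDist p) (hb : 0 ≤ b)
    (hv : ∀ x, ∑ y, p y * v x y ≤ b) :
    ∑ c : Fin J → X, piDist (fun _ => p) c
        * ((J : ℝ)⁻¹ * ∑ k, (u (c k) + ∑ j ∈ Finset.Iio k, v (c j) (c k)))
      ≤ ∑ x, p x * u x + (J - 1) * b := by
  simp only [mul_left_comm _ (J : ℝ)⁻¹, ← Finset.mul_sum]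
  rw [inv_mul_le_iff₀ (by positivity)]
  simp only [Finset.mul_sum]
  rw [Finset.sum_comm]
  refine (Finset.sum_le_card_nsmul _ _ _ fun k _ =>
    sum_piDist_mul_add_sum_Iio_le u hp hb hv k).trans_eq ?_
  simp only [Finset.card_univ, Fintype.card_fin, nsmul_eq_mul]

end Codebook

end ProductDistributions

section ConditionalDistributions

variable {A B : Type*} [Fintype B]

lemma IsDist.card_filter_le_inv {p : B → ℝ} (hp : IsDist p) {c : ℝ} (hc : 0 < c) :
    ((Finset.univ.filter fun b => c ≤ p b).card : ℝ) ≤ c⁻¹ := by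
  rw [← one_div, le_div_iff₀ hc, ← nsmul_eq_mul, ← hp.2]
  exact (Finset.card_nsmul_le_sum _ p c fun b hb => (Finset.mem_filter.mp hb).2).trans
    (Finset.sum_le_univ_sum_of_nonneg hp.1)

variable [Fintype A]

lemma IsDist.mul_conditional {P : A → ℝ} (hP : IsDist P) {l : A → B → ℝ} (hl : ∀ a, IsDist (l a)) :
    IsDist fun b : A × B => P b.1 * l b.1 b.2 := by
  refine ⟨fun b => mul_nonneg (hP.1 _) ((hl _).1 _), ?_⟩
  simp only [Fintype.sum_prod_type, ← Finset.mul_sum, (hl _).2, mul_one, hP.2]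

lemma sum_piDist_mul_sum_filter_piDist_lt {κ : Type*} [Fintype κ] [DecidableEq κ] (P : A → ℝ)
    (l : A → B → ℝ) (c : ℝ) :
    ∑ x : κ → A, piDist (fun _ => P) x
        * ∑ i with piDist (fun k => l (x k)) i < c, piDist (fun k => l (x k)) i
      = ∑ b : κ → A × B with ∏ k, l (b k).1 (b k).2 < c,
        piDist (fun _ (b : A × B) => P b.1 * l b.1 b.2) b := by
  rw [Finset.sum_filter,
    ← (Equiv.arrowProdEquivProdArrow κ (fun _ => A) (fun _ => B)).symm.sum_comp,
    Fintype.sum_prod_type]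
  refine Finset.sum_congr rfl fun x _ => ?_
  rw [Finset.sum_filter, Finset.mul_sum]
  refine Finset.sum_congr rfl fun i _ => ?_
  simp only [Equiv.arrowProdEquivProdArrow, Equiv.coe_fn_symm_mk, piDist, Finset.prod_mul_distrib,
    mul_ite, mul_zero]

end ConditionalDistributions

section Typicality

open Filter Topology

variable {B : Type*} [Fintype B] {Q : B → ℝ}

lemma exists_pos_sum_mul_exp_lt_one {f : B → ℝ} (hQ : ∑ b, Q b = 1)
    (hf : ∑ b, Q b * f b < 0) : ∃ t > 0, ∑ b, Q b * Real.exp (t * f b) < 1 := by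
  have h_deriv : HasDerivAt (fun t => ∑ b, Q b * Real.exp (t * f b)) (∑ b, Q b * f b) 0 := by
    refine HasDerivAt.fun_sum fun b _ => ?_
    simpa using (((hasDerivAt_id (0 : ℝ)).mul_const (f b)).exp).const_mul (Q b)
  obtain ⟨t, h_slope, ht⟩ :=
    ((h_deriv.tendsto_slope_zero_right.eventually (gt_mem_nhds hf)).and self_mem_nhdsWithin).exists
  have ht : 0 < t := ht
  refine ⟨t, ht, ?_⟩
  simp only [zero_add, zero_mul, Real.exp_zero, mul_one, hQ, smul_eq_mul] at h_slope
  linarith [(inv_mul_lt_iff₀ ht).mp h_slope]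

lemma sum_piDist_le_pow_sum_mul_exp (hQ : ∀ b, 0 ≤ Q b) (f : B → ℝ) {t : ℝ} (ht : 0 ≤ t) (n : ℕ) :
    ∑ b : Fin n → B with 0 ≤ ∑ k, f (b k), piDist (fun _ => Q) b
      ≤ (∑ b, Q b * Real.exp (t * f b)) ^ n := by
  rw [Fintype.sum_pow, Finset.sum_filter]
  refine Finset.sum_le_sum fun b _ => ?_
  rw [Finset.prod_mul_distrib, ← Real.exp_sum, ← Finset.mul_sum]
  have h_weight : 0 ≤ ∏ k, Q (b k) := Finset.prod_nonneg fun k _ => hQ _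
  split_ifs with h
  · exact le_mul_of_one_le_right h_weight (Real.one_le_exp (mul_nonneg ht h))
  · positivity

theorem tendsto_sum_piDist_of_mean_neg {f : B → ℝ} (hQ : IsDist Q) (hf : ∑ b, Q b * f b < 0) :
    Tendsto (fun n : ℕ => ∑ b : Fin n → B with 0 ≤ ∑ k, f (b k), piDist (fun _ => Q) b)
      atTop (𝓝 0) := by
  obtain ⟨t, ht, h_lt⟩ := exists_pos_sum_mul_exp_lt_one hQ.2 hf
  have h_nonneg : 0 ≤ ∑ b, Q b * Real.exp (t * f b) :=
    Finset.sum_nonneg fun b _ => mul_nonneg (hQ.1 b) (Real.exp_pos _).le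
  exact squeeze_zero (fun n => Finset.sum_nonneg fun b _ => piDist_nonneg (fun _ => hQ.1) b)
    (sum_piDist_le_pow_sum_mul_exp hQ.1 f ht.le)
    (tendsto_pow_atTop_nhds_zero_of_lt_one h_nonneg h_lt)

variable {l : B → ℝ} {h : ℝ}

lemma sum_neg_logb_sub_nonneg {n : ℕ} {x : Fin n → ℝ} (hx : ∀ k, 0 < x k)
    (h_lt : ∏ k, x k < (2 : ℝ) ^ (-(n * h))) : 0 ≤ ∑ k, (-Real.logb 2 (x k) - h) := by
  have h_log := Real.logb_lt_logb one_lt_two (Finset.prod_pos fun k _ => hx k) h_lt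
  rw [Real.logb_rpow two_pos (by norm_num), Real.logb_prod _ _ fun k _ => (hx k).ne'] at h_log
  simp only [Finset.sum_sub_distrib, Finset.sum_neg_distrib, Finset.sum_const, Finset.card_univ,
    Fintype.card_fin, nsmul_eq_mul]
  linarith

theorem tendsto_sum_piDist_prod_lt (hQ : IsDist Q) (hl : ∀ b, Q b ≠ 0 → 0 < l b)
    (hh : -∑ b, Q b * Real.logb 2 (l b) < h) :
    Tendsto (fun n : ℕ => ∑ b : Fin n → B with ∏ k, l (b k) < (2 : ℝ) ^ (-(n * h)),
      piDist (fun _ => Q) b) atTop (𝓝 0) := by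
  have h_mean : ∑ b, Q b * (-Real.logb 2 (l b) - h) < 0 := by
    simp only [mul_sub, Finset.sum_sub_distrib, ← Finset.sum_mul, hQ.2, mul_neg,
      Finset.sum_neg_distrib]
    linarith
  have h_nonneg (n : ℕ) (b : Fin n → B) : 0 ≤ piDist (fun _ => Q) b :=
    piDist_nonneg (fun _ => hQ.1) b
  refine squeeze_zero (fun n => Finset.sum_nonneg fun b _ => h_nonneg n b) (fun n => ?_)
    (tendsto_sum_piDist_of_mean_neg hQ h_mean)
  simp only [Finset.sum_filter]
  refine Finset.sum_le_sum fun b _ => ?_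
  by_cases h_null : piDist (fun _ => Q) b = 0
  · simp [h_null]
  · have h_pos (k : Fin n) : 0 < l (b k) :=
      hl _ (Finset.prod_ne_zero_iff.mp h_null k (Finset.mem_univ k))
    split_ifs with h_prod h_sum
    exacts [le_rfl, absurd (sum_neg_logb_sub_nonneg h_pos h_prod) h_sum, h_nonneg n b, le_rfl]

theorem tendsto_sum_piDist_lt_prod (hQ : IsDist Q) (hl : ∀ b, Q b ≠ 0 → 0 < l b)
    (hh : h < -∑ b, Q b * Real.logb 2 (l b)) :
    Tendsto (fun n : ℕ => ∑ b : Fin n → B with (2 : ℝ) ^ (-(n * h)) < ∏ k, l (b k),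
      piDist (fun _ => Q) b) atTop (𝓝 0) := by
  have h_nonneg (n : ℕ) (b : Fin n → B) : 0 ≤ piDist (fun _ => Q) b :=
    piDist_nonneg (fun _ => hQ.1) b
  have h_inv := tendsto_sum_piDist_prod_lt (l := l⁻¹) (h := -h) hQ
    (fun b hb => inv_pos.mpr (hl b hb)) (by simpa using neg_lt_neg hh)
  refine squeeze_zero (fun n => Finset.sum_nonneg fun b _ => h_nonneg n b) (fun n => ?_) h_inv
  refine Finset.sum_le_sum_of_subset_of_nonneg (fun b hb => ?_) fun b _ _ => h_nonneg n b
  simp only [Finset.mem_filter, Finset.mem_univ, true_and, Pi.inv_apply, Finset.prod_inv_distrib]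
    at hb ⊢
  rw [mul_neg, Real.rpow_neg two_pos.le]
  exact inv_strictAnti₀ (by positivity) hb

end Typicality

section Matrices

open Matrix
open scoped MatrixOrder

variable {d : Type*} [Fintype d]

lemma trace_mul_re_nonneg {M N : Matrix d d ℂ} (hM : 0 ≤ M) (hN : 0 ≤ N) :
    0 ≤ (M * N).trace.re := by
  classical
  obtain ⟨C, rfl⟩ := CStarAlgebra.nonneg_iff_eq_star_mul_self.mp hM
  rw [mul_assoc, trace_mul_comm]
  have h_conj : 0 ≤ C * N * star C := star_right_conjugate_nonneg hN C
  exact (Complex.le_def.mp (nonneg_iff_posSemidef.mp h_conj).trace_nonneg).1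

lemma trace_mul_re_le_trace_mul_re {M M' N : Matrix d d ℂ} (h : M ≤ M') (hN : 0 ≤ N) :
    (M * N).trace.re ≤ (M' * N).trace.re := by
  have h_diff := trace_mul_re_nonneg (sub_nonneg.mpr h) hN
  rwa [sub_mul, trace_sub, Complex.sub_re, sub_nonneg] at h_diff

variable [DecidableEq d]

/-- Real functions of an observable with orthonormal eigenbasis `U`: the operator
`U diag(a) U*` with eigenvalues `a`. -/
noncomputable def diagonalIn (U : unitaryGroup d ℂ) : (d → ℝ) →⋆ₐ[ℝ] Matrix d d ℂ where
  toFun a := Unitary.conjStarAlgAut ℂ _ U (diagonal fun i => (a i : ℂ))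
  map_one' := by simp
  map_mul' a b := by
    rw [← map_mul, diagonal_mul_diagonal]
    simp only [Pi.mul_apply, Complex.ofReal_mul]
  map_zero' := by simp
  map_add' a b := by
    rw [← map_add, diagonal_add]
    simp only [Pi.add_apply, Complex.ofReal_add]
  commutes' r := by
    have h_scalar : diagonal (fun _ : d => (r : ℂ)) = algebraMap ℂ (Matrix d d ℂ) r := rfl
    simp only [Pi.algebraMap_apply, Algebra.algebraMap_self, RingHom.id_apply, h_scalar,
      AlgHomClass.commutes]
    rfl
  map_star' a := by
    rw [← map_star, star_eq_conjTranspose, diagonal_conjTranspose]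
    congr 2
    funext i
    simp

lemma diagonalIn_apply (U : unitaryGroup d ℂ) (a : d → ℝ) :
    diagonalIn U a = U * diagonal (fun i => (a i : ℂ)) * star (U : Matrix d d ℂ) := rfl

lemma trace_diagonalIn_re (U : unitaryGroup d ℂ) (a : d → ℝ) :
    (diagonalIn U a).trace.re = ∑ i, a i := by
  rw [diagonalIn_apply, trace_mul_comm, ← mul_assoc, UnitaryGroup.star_mul_self, one_mul,
    trace_diagonal, Complex.re_sum]
  rfl

/-- The orthogonal projection onto the span of the basis vectors of `U` with index in `T`. -/
noncomputable def eigenProjection (U : unitaryGroup d ℂ) (T : Finset d) : Matrix d d ℂ :=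
  diagonalIn U (Set.indicator T 1)

section

variable (U : unitaryGroup d ℂ) (T : Finset d)

lemma isStarProjection_eigenProjection : IsStarProjection (eigenProjection U T) := by
  have h_indicator : IsStarProjection (Set.indicator T 1 : d → ℝ) := by
    refine ⟨funext fun i => ?_, IsSelfAdjoint.all _⟩
    by_cases hi : i ∈ (T : Set d) <;> simp [hi]
  exact h_indicator.map (diagonalIn U)

lemma trace_eigenProjection_re : (eigenProjection U T).trace.re = T.card := by
  rw [eigenProjection, trace_diagonalIn_re]
  simp [Set.indicator_apply]

lemma trace_one_sub_eigenProjection_mul_re (l : d → ℝ) :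
    ((1 - eigenProjection U T) * diagonalIn U l).trace.re = ∑ i ∈ Tᶜ, l i := by
  rw [eigenProjection, ← map_one (diagonalIn U), ← map_sub, ← map_mul, trace_diagonalIn_re,
    ← Finset.sum_indicator_subset _ (Finset.subset_univ Tᶜ)]
  refine Finset.sum_congr rfl fun i _ => ?_
  by_cases hi : i ∈ T <;> simp [hi]

variable {T} in
lemma eigenProjection_mul_diagonalIn_mul_le {l : d → ℝ} {c : ℝ} (hc : 0 ≤ c)
    (hT : ∀ i ∈ T, l i ≤ c) :
    eigenProjection U T * diagonalIn U l * eigenProjection U T ≤ c • 1 := by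
  rw [eigenProjection, ← map_one (diagonalIn U), ← map_mul, ← map_mul, ← map_smul]
  refine OrderHomClass.mono (diagonalIn U) fun i => ?_
  by_cases hi : i ∈ T
  · simpa [hi] using hT i hi
  · simpa [hi] using hc

end

lemma IsState.exists_eq_diagonalIn {ρ : Matrix d d ℂ} (hρ : IsState ρ) :
    ∃ U l, IsDist l ∧ ρ = diagonalIn U l ∧ vnEntropy ρ = -∑ i, l i * Real.logb 2 (l i) := by
  have h_herm := hρ.1.isHermitian
  refine ⟨h_herm.eigenvectorUnitary, h_herm.eigenvalues, ⟨hρ.1.eigenvalues_nonneg, ?_⟩,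
    h_herm.spectral_theorem, dif_pos h_herm⟩
  have h_trace := h_herm.trace_eq_sum_eigenvalues
  rw [hρ.2] at h_trace
  simpa using (congrArg Complex.re h_trace).symm

end Matrices

section TensorPowers

open Matrix
open scoped MatrixOrder

variable {n : ℕ} {ι : Type*} [Fintype ι]

lemma tensorPow_mul_tensorPow (M N : Fin n → Matrix ι ι ℂ) :
    tensorPow M * tensorPow N = tensorPow fun k => M k * N k := by
  classical
  ext i j
  simp only [tensorPow, mul_apply, of_apply, Fintype.prod_sum, Finset.prod_mul_distrib]

lemma star_tensorPow (M : Fin n → Matrix ι ι ℂ) :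
    star (tensorPow M) = tensorPow fun k => star (M k) := by
  ext i j
  simp [tensorPow, star_apply]

lemma tensorPow_nonneg {M : Fin n → Matrix ι ι ℂ} (hM : ∀ k, 0 ≤ M k) : 0 ≤ tensorPow M := by
  classical
  choose C hC using fun k => CStarAlgebra.nonneg_iff_eq_star_mul_self.mp (hM k)
  rw [funext hC, ← tensorPow_mul_tensorPow, ← star_tensorPow]
  exact star_mul_self_nonneg _

variable [DecidableEq ι]

lemma tensorPow_diagonal (a : Fin n → ι → ℂ) :
    tensorPow (fun k => diagonal (a k)) = diagonal fun i => ∏ k, a k (i k) := by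
  ext i j
  rcases eq_or_ne i j with rfl | h
  · simp [tensorPow]
  · obtain ⟨k, hk⟩ := Function.ne_iff.mp h
    rw [diagonal_apply_ne _ h]
    exact Finset.prod_eq_zero (Finset.mem_univ k) (diagonal_apply_ne _ hk)

lemma tensorPow_one : tensorPow (fun _ : Fin n => (1 : Matrix ι ι ℂ)) = 1 := by
  simpa using tensorPow_diagonal fun (_ : Fin n) (_ : ι) => 1

lemma tensorPow_mem_unitaryGroup (U : Fin n → unitaryGroup ι ℂ) :
    tensorPow (fun k => (U k : Matrix ι ι ℂ)) ∈ unitaryGroup (Fin n → ι) ℂ := by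
  rw [mem_unitaryGroup_iff, star_tensorPow, tensorPow_mul_tensorPow]
  simp only [mem_unitaryGroup_iff.mp (U _).2, tensorPow_one]

lemma tensorPow_diagonalIn (U : Fin n → unitaryGroup ι ℂ) (l : Fin n → ι → ℝ) :
    tensorPow (fun k => diagonalIn (U k) (l k))
      = diagonalIn ⟨_, tensorPow_mem_unitaryGroup U⟩ (piDist l) := by
  simp only [diagonalIn_apply, piDist, Complex.ofReal_prod]
  rw [← tensorPow_diagonal fun k i => (l k i : ℂ), star_tensorPow, tensorPow_mul_tensorPow,
    tensorPow_mul_tensorPow]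

end TensorPowers

section RandomCoding

open Matrix
open scoped MatrixOrder

variable {X d : Type*} [Fintype d]

section MeanState

variable [Fintype X]

/-- The state `PW = ∑ a, P a • W a` at the output of the channel `W` for a random input with
law `P`. -/
noncomputable def meanState (P : X → ℝ) (W : X → Matrix d d ℂ) : Matrix d d ℂ :=
  ∑ a, (P a : ℂ) • W a

lemma IsDist.isState_meanState {P : X → ℝ} (hP : IsDist P) {W : X → Matrix d d ℂ}
    (hW : ∀ a, IsState (W a)) : IsState (meanState P W) := by
  constructor
  · exact posSemidef_sum _ fun a _ => (hW a).1.smul (Complex.zero_le_real.mpr (hP.1 a))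
  · simp only [meanState, trace_sum, trace_smul, (hW _).2, smul_eq_mul, mul_one]
    exact_mod_cast hP.2

lemma sum_mul_trace_mul_re (P : X → ℝ) (M : Matrix d d ℂ) (W : X → Matrix d d ℂ) :
    ∑ a, P a * (M * W a).trace.re = (M * meanState P W).trace.re := by
  simp only [meanState, Finset.mul_sum, trace_sum, Complex.re_sum, Matrix.mul_smul, trace_smul,
    smul_eq_mul, Complex.re_ofReal_mul]

lemma meanState_piDist_cqPow (P : X → ℝ) (W : X → Matrix d d ℂ) (n : ℕ) :
    meanState (piDist fun _ => P) (cqPow W n) = tensorPow fun _ => meanState P W := by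
  classical
  ext i j
  simp only [meanState, piDist, cqPow, tensorPow, Matrix.sum_apply, Matrix.smul_apply, of_apply,
    Fintype.prod_sum, Complex.ofReal_prod, smul_eq_mul, Finset.prod_mul_distrib]

end MeanState

lemma cqPow_nonneg {W : X → Matrix d d ℂ} (hW : ∀ a, IsState (W a)) {n : ℕ} (x : Fin n → X) :
    0 ≤ cqPow W n x :=
  tensorPow_nonneg fun k => (hW (x k)).1.nonneg

variable [DecidableEq d] {J : ℕ}

/-- The average error probability of the code with codewords `c k` and decoder `E` over the
channel `W`, all messages being equally likely. -/
noncomputable def avgError (W : X → Matrix d d ℂ) (c : Fin J → X) (E : Fin J → Matrix d d ℂ) : ℝ :=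
  (J : ℝ)⁻¹ * ∑ k, ((1 - E k) * W (c k)).trace.re

lemma avgError_nonneg {W : X → Matrix d d ℂ} (hW : ∀ x, 0 ≤ W x) (c : Fin J → X)
    {E : Fin J → Matrix d d ℂ} (hE : IsPOVM E) : 0 ≤ avgError W c E := by
  have h_le_one (k : Fin J) : E k ≤ 1 :=
    (Finset.single_le_sum (fun j _ => (hE.1 j).nonneg) (Finset.mem_univ k)).trans
      (le_iff.mpr hE.2)
  exact mul_nonneg (by positivity) (Finset.sum_nonneg fun k _ =>
    trace_mul_re_nonneg (sub_nonneg.mpr (h_le_one k)) (hW _))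

lemma isPOVM_sequentialDecoder {G : Matrix d d ℂ} (hG : IsStarProjection G)
    {Q : Fin J → Matrix d d ℂ} (hQ : ∀ j, IsStarProjection (Q j)) :
    IsPOVM (sequentialDecoder G Q) :=
  ⟨fun k => (sequentialDecoder_nonneg hG hQ k).posSemidef,
    le_iff.mp (sum_sequentialDecoder_le_one hG hQ)⟩

lemma trace_one_sub_sequentialDecoder_mul_re_le {G : Matrix d d ℂ} (hG : IsStarProjection G)
    {Q : Fin J → Matrix d d ℂ}
    (hQ : ∀ j, IsStarProjection (Q j)) {ρ : Matrix d d ℂ} (hρ : 0 ≤ ρ) (k : Fin J) :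
    ((1 - sequentialDecoder G Q k) * ρ).trace.re
      ≤ 9 * ((1 - G) * ρ).trace.re + 8 * ((1 - Q k) * ρ).trace.re
        + ∑ j ∈ Finset.Iio k, 4 * (G * Q j * G * ρ).trace.re := by
  refine (trace_mul_re_le_trace_mul_re (one_sub_sequentialDecoder_le hG hQ k) hρ).trans_eq ?_
  simp only [add_mul, smul_mul_assoc, Finset.sum_mul, trace_add, trace_smul, trace_sum,
    Complex.add_re, ← Finset.mul_sum]
  simp

lemma avgError_sequentialDecoder_le {W : X → Matrix d d ℂ} (hW : ∀ x, 0 ≤ W x)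
    {G : Matrix d d ℂ} (hG : IsStarProjection G) {Q : X → Matrix d d ℂ}
    (hQ : ∀ x, IsStarProjection (Q x)) (c : Fin J → X) :
    avgError W c (sequentialDecoder G fun k => Q (c k)) ≤ (J : ℝ)⁻¹ * ∑ k,
      (9 * ((1 - G) * W (c k)).trace.re + 8 * ((1 - Q (c k)) * W (c k)).trace.re
        + ∑ j ∈ Finset.Iio k, 4 * (G * Q (c j) * G * W (c k)).trace.re) :=
  mul_le_mul_of_nonneg_left (Finset.sum_le_sum fun k _ =>
    trace_one_sub_sequentialDecoder_mul_re_le hG (fun j => hQ (c j)) (hW (c k)) k) (by positivity)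

variable [Fintype X] {p : X → ℝ} {W : X → Matrix d d ℂ}

lemma sum_mul_trace_mul_projection_mul_re_le {G Q : Matrix d d ℂ} (hQ : IsStarProjection Q)
    {α : ℝ} (hα : G * meanState p W * G ≤ α • 1) :
    ∑ y, p y * (G * Q * G * W y).trace.re ≤ α * Q.trace.re := by
  have h_cyclic : (G * Q * G * meanState p W).trace = (G * meanState p W * G * Q).trace := by
    rw [mul_assoc, trace_mul_comm, ← mul_assoc]
  rw [sum_mul_trace_mul_re, h_cyclic]
  refine (trace_mul_re_le_trace_mul_re hα hQ.nonneg).trans_eq ?_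
  rw [smul_mul_assoc, one_mul, trace_smul, Complex.smul_re, smul_eq_mul]

/-- One-shot packing lemma: `G` and `Q x` play the roles of the typical projection and of the
conditionally typical projections. -/
theorem sum_piDist_mul_avgError_sequentialDecoder_le (hp : IsDist p) (hW : ∀ x, 0 ≤ W x)
    {G : Matrix d d ℂ} (hG : IsStarProjection G) {Q : X → Matrix d d ℂ}
    (hQ : ∀ x, IsStarProjection (Q x)) {α β : ℝ} (hα : 0 ≤ α) (hβ : 0 ≤ β) (hJ : J ≠ 0)
    (hGα : G * meanState p W * G ≤ α • 1) (hQβ : ∀ x, (Q x).trace.re ≤ β) :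
    ∑ c, piDist (fun _ => p) c * avgError W c (sequentialDecoder G fun k : Fin J => Q (c k))
      ≤ 9 * ((1 - G) * meanState p W).trace.re + 8 * ∑ x, p x * ((1 - Q x) * W x).trace.re
        + (J - 1) * (4 * (α * β)) := by
  have h_collision (x : X) : ∑ y, p y * (4 * (G * Q x * G * W y).trace.re) ≤ 4 * (α * β) := by
    simp only [mul_left_comm _ (4 : ℝ), ← Finset.mul_sum]
    gcongr
    exact (sum_mul_trace_mul_projection_mul_re_le (hQ x) hGα).trans (by gcongr; exact hQβ x)
  have h_average := sum_piDist_mul_average_le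
    (fun x => 9 * ((1 - G) * W x).trace.re + 8 * ((1 - Q x) * W x).trace.re) hJ hp
    (mul_nonneg zero_le_four (mul_nonneg hα hβ)) h_collision
  refine (Finset.sum_le_sum fun c _ => mul_le_mul_of_nonneg_left
    (avgError_sequentialDecoder_le hW hG hQ c) (piDist_nonneg (fun _ => hp.1) c)).trans
    (h_average.trans_eq ?_)
  simp only [mul_add, Finset.sum_add_distrib, mul_left_comm _ (9 : ℝ), mul_left_comm _ (8 : ℝ),
    ← Finset.mul_sum, sum_mul_trace_mul_re]

end RandomCoding

section TypicalProjections

open Matrix Filter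
open scoped MatrixOrder

variable {ι A : Type*} [Fintype ι] [DecidableEq ι]

theorem eventually_exists_typicalProjection {σ : Matrix ι ι ℂ} (hσ : IsState σ) {h ε : ℝ}
    (hh : h < vnEntropy σ) (hε : 0 < ε) :
    ∀ᶠ n : ℕ in atTop, ∃ G, IsStarProjection G ∧
      ((1 - G) * tensorPow fun _ : Fin n => σ).trace.re ≤ ε ∧
      G * (tensorPow fun _ : Fin n => σ) * G ≤ (2 : ℝ) ^ (-(n * h)) • 1 := by
  obtain ⟨U, l, hl, rfl, h_entropy⟩ := hσ.exists_eq_diagonalIn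
  rw [h_entropy] at hh
  have h_small := tendsto_sum_piDist_lt_prod hl (fun i hi => (hl.1 i).lt_of_ne' hi) hh
  filter_upwards [h_small.eventually_le_const hε] with n hn
  rw [tensorPow_diagonalIn]
  refine ⟨eigenProjection _ {i | ∏ k, l (i k) ≤ (2 : ℝ) ^ (-(n * h))},
    isStarProjection_eigenProjection _ _, ?_,
    eigenProjection_mul_diagonalIn_mul_le _ (by positivity) fun i hi => (Finset.mem_filter.mp hi).2⟩
  rw [trace_one_sub_eigenProjection_mul_re, Finset.compl_filter]
  simpa only [not_le] using hn

theorem eventually_exists_conditionalProjections [Fintype A] {W : A → Matrix ι ι ℂ}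
    (hW : ∀ a, IsState (W a)) {P : A → ℝ} (hP : IsDist P) {h ε : ℝ}
    (hh : ∑ a, P a * vnEntropy (W a) < h) (hε : 0 < ε) :
    ∀ᶠ n : ℕ in atTop, ∃ Q : (Fin n → A) → Matrix (Fin n → ι) (Fin n → ι) ℂ,
      (∀ x, IsStarProjection (Q x)) ∧
      ∑ x, piDist (fun _ => P) x * ((1 - Q x) * cqPow W n x).trace.re ≤ ε ∧
      ∀ x, (Q x).trace.re ≤ (2 : ℝ) ^ (n * h) := by
  choose U l hl hWl h_entropy using fun a => (hW a).exists_eq_diagonalIn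
  have h_cqPow (n : ℕ) (x : Fin n → A) : cqPow W n x
      = diagonalIn ⟨_, tensorPow_mem_unitaryGroup fun k => U (x k)⟩ (piDist fun k => l (x k)) := by
    rw [← tensorPow_diagonalIn]
    simp only [cqPow, ← hWl]
  have h_mean : -∑ b : A × ι, P b.1 * l b.1 b.2 * Real.logb 2 (l b.1 b.2) < h := by
    simpa only [Fintype.sum_prod_type, h_entropy, mul_neg, Finset.sum_neg_distrib, Finset.mul_sum,
      mul_assoc] using hh
  have h_small := tendsto_sum_piDist_prod_lt (hP.mul_conditional hl)
    (fun b hb => ((hl b.1).1 b.2).lt_of_ne' (right_ne_zero_of_mul hb)) h_mean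
  filter_upwards [h_small.eventually_le_const hε] with n hn
  refine ⟨fun x => eigenProjection ⟨_, tensorPow_mem_unitaryGroup fun k => U (x k)⟩
      {i | (2 : ℝ) ^ (-(n * h)) ≤ piDist (fun k => l (x k)) i},
    fun x => isStarProjection_eigenProjection _ _, ?_, fun x => ?_⟩
  · simpa only [h_cqPow, trace_one_sub_eigenProjection_mul_re, Finset.compl_filter, not_le,
      sum_piDist_mul_sum_filter_piDist_lt] using hn
  · rw [trace_eigenProjection_re]
    refine ((IsDist.piDist fun k => hl (x k)).card_filter_le_inv (by positivity)).trans_eq ?_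
    rw [Real.rpow_neg two_pos.le, inv_inv]

end TypicalProjections

section Achievability

open Filter Topology

variable {ι A : Type*} [Fintype ι] [DecidableEq ι] [Fintype A]

lemma tendsto_ceil_two_rpow_sub_one_mul_rpow {R s t : ℝ} (hR : R < s - t) :
    Tendsto (fun n : ℕ => ((⌈(2 : ℝ) ^ (n * R)⌉₊ : ℝ) - 1)
      * ((2 : ℝ) ^ (-(n * s)) * (2 : ℝ) ^ (n * t))) atTop (𝓝 0) := by
  have h_ratio : (2 : ℝ) ^ (R + t - s) < 1 :=
    Real.rpow_lt_one_of_one_lt_of_neg one_lt_two (by linarith)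
  refine squeeze_zero (fun n => ?_) (fun n => ?_)
    (tendsto_pow_atTop_nhds_zero_of_lt_one (by positivity) h_ratio)
  · have h_one_le : (1 : ℝ) ≤ ⌈(2 : ℝ) ^ (n * R)⌉₊ :=
      Nat.one_le_cast.mpr (Nat.ceil_pos.mpr (by positivity))
    exact mul_nonneg (sub_nonneg.mpr h_one_le) (by positivity)
  · have h_ceil : (⌈(2 : ℝ) ^ (n * R)⌉₊ : ℝ) - 1 ≤ (2 : ℝ) ^ (n * R) :=
      sub_le_iff_le_add.mpr (Nat.ceil_lt_add_one (by positivity)).le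
    calc _ ≤ (2 : ℝ) ^ (n * R) * ((2 : ℝ) ^ (-(n * s)) * (2 : ℝ) ^ (n * t)) := by gcongr
      _ = ((2 : ℝ) ^ (R + t - s)) ^ n := by
        rw [← Real.rpow_add two_pos, ← Real.rpow_add two_pos, ← Real.rpow_mul_natCast two_pos.le]
        ring_nf

lemma le_one_div_mul_logb_ceil_two_rpow {n : ℕ} (hn : 0 < n) (R : ℝ) :
    R ≤ (1 / n : ℝ) * Real.logb 2 ⌈(2 : ℝ) ^ (n * R)⌉₊ := by
  have hn' : (0 : ℝ) < n := Nat.cast_pos.mpr hn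
  rw [one_div, le_inv_mul_iff₀ hn', Real.le_logb_iff_rpow_le one_lt_two
    (Nat.cast_pos.mpr (Nat.ceil_pos.mpr (by positivity)))]
  exact Nat.le_ceil _

/-- Random coding for a single channel. The law of the codebook does not depend on `W`, so the same
random codebook serves both receivers. -/
theorem eventually_exists_decoder_sum_piDist_mul_avgError_le {W : A → Matrix ι ι ℂ}
    (hW : ∀ a, IsState (W a)) {P : A → ℝ} (hP : IsDist P) {R ε : ℝ} (hR : R < holevo P W)
    (hε : 0 < ε) :
    ∀ᶠ n : ℕ in atTop, ∃ D : (Fin ⌈(2 : ℝ) ^ (n * R)⌉₊ → Fin n → A) →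
        Fin ⌈(2 : ℝ) ^ (n * R)⌉₊ → Matrix (Fin n → ι) (Fin n → ι) ℂ,
      (∀ c, IsPOVM (D c)) ∧
      ∑ c, piDist (fun _ => piDist fun _ => P) c * avgError (cqPow W n) c (D c) ≤ ε := by
  obtain ⟨γ, hγ, hRγ⟩ : ∃ γ > 0, R < holevo P W - 2 * γ :=
    ⟨(holevo P W - R) / 4, by linarith, by linarith⟩
  set s := vnEntropy (meanState P W) - γ
  set t := ∑ a, P a * vnEntropy (W a) + γ
  have hRst : R < s - t := hRγ.trans_eq (by simp only [s, t, holevo, meanState]; ring)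
  filter_upwards [
    eventually_exists_typicalProjection (hP.isState_meanState hW) (sub_lt_self _ hγ)
      (show 0 < ε / 21 by positivity),
    eventually_exists_conditionalProjections hW hP (lt_add_of_pos_right _ hγ)
      (show 0 < ε / 21 by positivity),
    (tendsto_ceil_two_rpow_sub_one_mul_rpow hRst).eventually_le_const
      (show 0 < ε / 21 by positivity)] with n ⟨G, hG, hGε, hGs⟩ ⟨Q, hQ, hQε, hQt⟩ h_rate
  refine ⟨fun c => sequentialDecoder G fun k => Q (c k),
    fun c => isPOVM_sequentialDecoder hG fun k => hQ (c k), ?_⟩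
  rw [← meanState_piDist_cqPow] at hGε hGs
  have h_packing := sum_piDist_mul_avgError_sequentialDecoder_le (IsDist.piDist fun _ => hP)
    (cqPow_nonneg hW) hG hQ (by positivity) (by positivity)
    (Nat.ceil_pos.mpr (show 0 < (2 : ℝ) ^ (n * R) by positivity)).ne' hGs hQt
  linarith

end Achievability

/-- Common-message broadcast achievability (network-coding strategy of Remark 2). -/
theorem common_message_broadcast_achievability
    {A ι₁ ι₂ : Type*} [Fintype A] [Fintype ι₁] [DecidableEq ι₁] [Fintype ι₂] [DecidableEq ι₂]
    (W1 : A → Matrix ι₁ ι₁ ℂ) (W2 : A → Matrix ι₂ ι₂ ℂ)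
    (hW1 : ∀ a, IsState (W1 a)) (hW2 : ∀ a, IsState (W2 a))
    (P : A → ℝ) (hP : IsDist P)
    (ε δ : ℝ) (hε : 0 < ε) (hδ : 0 < δ) :
    ∃ N : ℕ, ∀ n : ℕ, N ≤ n →
      ∃ J : ℕ, 1 ≤ J ∧
        min (holevo P W1) (holevo P W2) - δ ≤ (1 / n : ℝ) * Real.logb 2 J ∧
        ∃ (c : Fin J → Fin n → A)
          (E : Fin J → Matrix (Fin n → ι₁) (Fin n → ι₁) ℂ)
          (F : Fin J → Matrix (Fin n → ι₂) (Fin n → ι₂) ℂ),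
          IsPOVM E ∧ IsPOVM F ∧
          ((J : ℝ))⁻¹ * ∑ k, ((1 - E k) * cqPow W1 n (c k)).trace.re ≤ ε ∧
          ((J : ℝ))⁻¹ * ∑ k, ((1 - F k) * cqPow W2 n (c k)).trace.re ≤ ε := by
  classical
  set R := min (holevo P W1) (holevo P W2) - δ
  have hR1 : R < holevo P W1 := (sub_lt_self _ hδ).trans_le (min_le_left _ _)
  have hR2 : R < holevo P W2 := (sub_lt_self _ hδ).trans_le (min_le_right _ _)
  refine Filter.eventually_atTop.mp ?_
  filter_upwards [Filter.eventually_gt_atTop 0,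
    eventually_exists_decoder_sum_piDist_mul_avgError_le hW1 hP hR1 (half_pos hε),
    eventually_exists_decoder_sum_piDist_mul_avgError_le hW2 hP hR2 (half_pos hε)]
    with n hn ⟨D1, hD1, h_err1⟩ ⟨D2, hD2, h_err2⟩
  obtain ⟨c, hc⟩ : ∃ c, avgError (cqPow W1 n) c (D1 c) + avgError (cqPow W2 n) c (D2 c) ≤ ε := by
    refine (IsDist.piDist fun _ => IsDist.piDist fun _ => hP).exists_le_of_sum_mul_le ?_
    simp only [mul_add, Finset.sum_add_distrib]
    exact (add_le_add h_err1 h_err2).trans_eq (add_halves ε)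
  have h_nonneg1 := avgError_nonneg (cqPow_nonneg hW1) c (hD1 c)
  have h_nonneg2 := avgError_nonneg (cqPow_nonneg hW2) c (hD2 c)
  exact ⟨⌈(2 : ℝ) ^ (n * R)⌉₊, Nat.ceil_pos.mpr (by positivity),
    le_one_div_mul_logb_ceil_two_rpow hn R, c, D1 c, D2 c, hD1 c, hD2 c,
    (le_add_of_nonneg_right h_nonneg2).trans hc, (le_add_of_nonneg_left h_nonneg1).trans hc⟩
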